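/- arXiv:2111.08854 — 3 statements merged into one kernel-verified Lean document; each statement's English description precedes it below -/
import Mathlib

section
/- Let A, C ∈ ℝ^{n×n}, B, D ∈ ℝ^{n×m}, P, Q ∈ S^n, S ∈ ℝ^{n×m}, and let R ∈ S^m be invertible. Let E : Θ → ℝ^{n×n} and F : Θ → ℝ^{n×m} be measurable with ∫|E(θ)|²ν(dθ) < ∞ and ∫|F(θ)|²ν(dθ) < ∞. Assume Σ₀ := R + DᵀP D + ∫F(θ)ᵀP F(θ)ν(dθ) is invertible. Define A₁ := A − B R⁻¹Sᵀ, C₁ := C − D R⁻¹Sᵀ, E₁(θ) := E(θ) − F(θ)R⁻¹Sᵀ, Q₁ := Q − S R⁻¹Sᵀ. Then P A + AᵀP + CᵀP C + ∫EᵀP E dν + Q − (S + P B + CᵀP D + ∫EᵀP F dν) Σ₀⁻¹ (Sᵀ + BᵀP + DᵀP C + ∫FᵀP E dν) = P A₁ + A₁ᵀP + C₁ᵀP C₁ + ∫E₁ᵀP E₁ dν + Q₁ − (P B + C₁ᵀP D + ∫E₁ᵀP F dν) Σ₀⁻¹ (BᵀP + DᵀP C₁ + ∫FᵀP E₁ dν).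 (Part 1 of Lemma 3.3: the Riccati equations (3.2) for Problem MF and (3.8) for Problem NC are the same.) -/
open Matrix MeasureTheory

noncomputable section

/-- Entrywise (Bochner) integral of a matrix-valued function. -/
def matInt {Θ : Type*} [MeasurableSpace Θ] (ν : Measure Θ) {p q : ℕ}
    (M : Θ → Matrix (Fin p) (Fin q) ℝ) : Matrix (Fin p) (Fin q) ℝ :=
  Matrix.of fun i j => ∫ θ, M θ i j ∂ν

/-- Entrywise integrability. -/
def MI {Θ : Type*} [MeasurableSpace Θ] (ν : Measure Θ) {p q : ℕ}
    (M : Θ → Matrix (Fin p) (Fin q) ℝ) : Prop :=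
  ∀ i j, Integrable (fun θ => M θ i j) ν

section helpers
variable {Θ : Type*} [MeasurableSpace Θ] {ν : Measure Θ} {p q r : ℕ}

theorem MI.sub {M N : Θ → Matrix (Fin p) (Fin q) ℝ} (hM : MI ν M) (hN : MI ν N) :
    MI ν (fun θ => M θ - N θ) := fun i j => (hM i j).sub (hN i j)

theorem MI.mul_const {M : Θ → Matrix (Fin p) (Fin q) ℝ} (hM : MI ν M)
    (K : Matrix (Fin q) (Fin r) ℝ) : MI ν (fun θ => M θ * K) := fun i j => by
  simp only [Matrix.mul_apply]
  exact integrable_finsetSum _ fun k _ => (hM i k).mul_const _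

theorem MI.const_mul {M : Θ → Matrix (Fin p) (Fin q) ℝ} (hM : MI ν M)
    (K : Matrix (Fin r) (Fin p) ℝ) : MI ν (fun θ => K * M θ) := fun i j => by
  simp only [Matrix.mul_apply]
  exact integrable_finsetSum _ fun k _ => (hM k j).const_mul _

theorem matInt_sub {M N : Θ → Matrix (Fin p) (Fin q) ℝ} (hM : MI ν M) (hN : MI ν N) :
    matInt ν (fun θ => M θ - N θ) = matInt ν M - matInt ν N := by
  ext i j
  exact integral_sub (hM i j) (hN i j)

theorem matInt_mul_const {M : Θ → Matrix (Fin p) (Fin q) ℝ} (hM : MI ν M)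
    (K : Matrix (Fin q) (Fin r) ℝ) : matInt ν (fun θ => M θ * K) = matInt ν M * K := by
  ext i j
  simp only [matInt, Matrix.mul_apply, Matrix.of_apply]
  rw [integral_finsetSum _ fun k _ => (hM i k).mul_const _]
  simp only [integral_mul_const]

theorem matInt_const_mul {M : Θ → Matrix (Fin p) (Fin q) ℝ} (hM : MI ν M)
    (K : Matrix (Fin r) (Fin p) ℝ) : matInt ν (fun θ => K * M θ) = K * matInt ν M := by
  ext i j
  simp only [matInt, Matrix.mul_apply, Matrix.of_apply]
  rw [integral_finsetSum _ fun k _ => (hM k j).const_mul _]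
  simp only [integral_const_mul]

theorem memLp_entry {M : Θ → Matrix (Fin p) (Fin q) ℝ}
    (hmeas : ∀ i j, Measurable fun θ => M θ i j)
    (h2 : Integrable (fun θ => ∑ i, ∑ j, (M θ i j) ^ 2) ν) (i : Fin p) (j : Fin q) :
    MemLp (fun θ => M θ i j) 2 ν := by
  rw [memLp_two_iff_integrable_sq (hmeas i j).aestronglyMeasurable]
  refine h2.mono ((hmeas i j).pow_const 2).aestronglyMeasurable (.of_forall fun θ => ?_)
  have h0 : ∀ i, 0 ≤ ∑ j, (M θ i j) ^ 2 := fun i => Finset.sum_nonneg fun j _ => sq_nonneg _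
  rw [Real.norm_of_nonneg (sq_nonneg _),
    Real.norm_of_nonneg (Finset.sum_nonneg fun i _ => h0 i)]
  exact (Finset.single_le_sum (f := fun j => (M θ i j) ^ 2) (fun j _ => sq_nonneg _)
    (Finset.mem_univ j)).trans
    (Finset.single_le_sum (f := fun i => ∑ j, (M θ i j) ^ 2) (fun i _ => h0 i)
      (Finset.mem_univ i))

theorem MI_quad {n : ℕ} {M : Θ → Matrix (Fin n) (Fin p) ℝ} {N : Θ → Matrix (Fin n) (Fin q) ℝ}
    (hM : ∀ i j, MemLp (fun θ => M θ i j) 2 ν) (hN : ∀ i j, MemLp (fun θ => N θ i j) 2 ν)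
    (P : Matrix (Fin n) (Fin n) ℝ) : MI ν (fun θ => (M θ)ᵀ * P * N θ) := fun i j => by
  simp only [Matrix.mul_apply, Matrix.transpose_apply, Finset.sum_mul]
  refine integrable_finsetSum _ fun k _ => integrable_finsetSum _ fun l _ => ?_
  have := ((hM l i).integrable_mul (hN k j)).const_mul (P l k)
  refine this.congr (.of_forall fun θ => ?_)
  simp only [Pi.mul_apply]
  ring

end helpers

/-- Part 1 of Lemma 3.3: the Riccati equation (3.2) for Problem MF and the
Riccati equation (3.8) for Problem NC have the same right-hand side. -/
theorem riccati_generators_eq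
    {n m : ℕ} (hn : 0 < n) (hm : 0 < m)
    {Θ : Type*} [MeasurableSpace Θ] (ν : Measure Θ)
    (A C : Matrix (Fin n) (Fin n) ℝ) (B D : Matrix (Fin n) (Fin m) ℝ)
    (P Q : Matrix (Fin n) (Fin n) ℝ) (hP : P.IsSymm) (hQ : Q.IsSymm)
    (S : Matrix (Fin n) (Fin m) ℝ)
    (R : Matrix (Fin m) (Fin m) ℝ) (hR : R.IsSymm) (hRinv : IsUnit R.det)
    (E : Θ → Matrix (Fin n) (Fin n) ℝ) (F : Θ → Matrix (Fin n) (Fin m) ℝ)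
    (hEmeas : ∀ i j, Measurable fun θ => E θ i j)
    (hFmeas : ∀ i j, Measurable fun θ => F θ i j)
    (hE2 : Integrable (fun θ => ∑ i, ∑ j, (E θ i j) ^ 2) ν)
    (hF2 : Integrable (fun θ => ∑ i, ∑ j, (F θ i j) ^ 2) ν)
    (Sg0 : Matrix (Fin m) (Fin m) ℝ)
    (hSg0 : Sg0 = R + Dᵀ * P * D + matInt ν (fun θ => (F θ)ᵀ * P * F θ))
    (hSg0inv : IsUnit Sg0.det)
    (A₁ C₁ : Matrix (Fin n) (Fin n) ℝ) (hA₁ : A₁ = A - B * R⁻¹ * Sᵀ)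
    (hC₁ : C₁ = C - D * R⁻¹ * Sᵀ)
    (E₁ : Θ → Matrix (Fin n) (Fin n) ℝ)
    (hE₁ : ∀ θ, E₁ θ = E θ - F θ * R⁻¹ * Sᵀ)
    (Q₁ : Matrix (Fin n) (Fin n) ℝ) (hQ₁ : Q₁ = Q - S * R⁻¹ * Sᵀ) :
    P * A + Aᵀ * P + Cᵀ * P * C + matInt ν (fun θ => (E θ)ᵀ * P * E θ) + Q
      - (S + P * B + Cᵀ * P * D + matInt ν (fun θ => (E θ)ᵀ * P * F θ)) * Sg0⁻¹
        * (Sᵀ + Bᵀ * P + Dᵀ * P * C + matInt ν (fun θ => (F θ)ᵀ * P * E θ))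
      = P * A₁ + A₁ᵀ * P + C₁ᵀ * P * C₁ + matInt ν (fun θ => (E₁ θ)ᵀ * P * E₁ θ) + Q₁
        - (P * B + C₁ᵀ * P * D + matInt ν (fun θ => (E₁ θ)ᵀ * P * F θ)) * Sg0⁻¹
          * (Bᵀ * P + Dᵀ * P * C₁ + matInt ν (fun θ => (F θ)ᵀ * P * E₁ θ)) := by
  have hE := memLp_entry hEmeas hE2
  have hF := memLp_entry hFmeas hF2
  have iEE := MI_quad hE hE P
  have iEF := MI_quad hE hF P
  have iFE := MI_quad hF hE P
  have iFF := MI_quad hF hF P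
  obtain ⟨K, hK⟩ : ∃ K, K = R⁻¹ * Sᵀ := ⟨_, rfl⟩
  have hRK : R * K = Sᵀ := by
    rw [hK, ← Matrix.mul_assoc, Matrix.mul_nonsing_inv _ hRinv, Matrix.one_mul]
  have hKR : Kᵀ * R = S := by
    have := congrArg Matrix.transpose hRK
    rwa [Matrix.transpose_mul, hR.eq, Matrix.transpose_transpose] at this
  have e1 : (fun θ => (E₁ θ)ᵀ * P * F θ)
      = fun θ => (E θ)ᵀ * P * F θ - Kᵀ * ((F θ)ᵀ * P * F θ) := by
    funext θ
    rw [hE₁, Matrix.mul_assoc (F θ), ← hK]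
    simp only [Matrix.transpose_sub, Matrix.transpose_mul, Matrix.sub_mul, Matrix.mul_assoc]
  have e2 : (fun θ => (F θ)ᵀ * P * E₁ θ)
      = fun θ => (F θ)ᵀ * P * E θ - ((F θ)ᵀ * P * F θ) * K := by
    funext θ
    rw [hE₁, Matrix.mul_assoc (F θ), ← hK]
    simp only [Matrix.mul_sub, Matrix.mul_assoc]
  have e3 : (fun θ => (E₁ θ)ᵀ * P * E₁ θ)
      = fun θ => ((E θ)ᵀ * P * E θ - ((E θ)ᵀ * P * F θ) * K)
          - Kᵀ * ((F θ)ᵀ * P * E θ - ((F θ)ᵀ * P * F θ) * K) := by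
    funext θ
    rw [hE₁, Matrix.mul_assoc (F θ), ← hK]
    simp only [Matrix.transpose_sub, Matrix.transpose_mul, Matrix.sub_mul, Matrix.mul_sub,
      Matrix.mul_assoc]
    abel
  rw [e1, e2, e3, matInt_sub iEF (iFF.const_mul _), matInt_const_mul iFF,
    matInt_sub iFE (iFF.mul_const _), matInt_mul_const iFF,
    matInt_sub (iEE.sub (iEF.mul_const _)) ((iFE.sub (iFF.mul_const _)).const_mul _),
    matInt_const_mul (iFE.sub (iFF.mul_const _)), matInt_sub iFE (iFF.mul_const _),
    matInt_mul_const iFF, matInt_sub iEE (iEF.mul_const _), matInt_mul_const iEF]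
  rw [Matrix.mul_assoc B, ← hK] at hA₁
  rw [Matrix.mul_assoc D, ← hK] at hC₁
  rw [Matrix.mul_assoc S, ← hK] at hQ₁
  generalize matInt ν (fun θ => (E θ)ᵀ * P * E θ) = X at *
  generalize matInt ν (fun θ => (E θ)ᵀ * P * F θ) = Y at *
  generalize matInt ν (fun θ => (F θ)ᵀ * P * E θ) = Z at *
  generalize matInt ν (fun θ => (F θ)ᵀ * P * F θ) = W at *
  have hL : P * B + C₁ᵀ * P * D + (Y - Kᵀ * W) = (S + P * B + Cᵀ * P * D + Y) - Kᵀ * Sg0 := by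
    rw [hSg0, hC₁, Matrix.mul_add, Matrix.mul_add, hKR]
    simp only [Matrix.transpose_sub, Matrix.transpose_mul, Matrix.sub_mul, Matrix.mul_assoc]
    abel
  have hL' : Bᵀ * P + Dᵀ * P * C₁ + (Z - W * K)
      = (Sᵀ + Bᵀ * P + Dᵀ * P * C + Z) - Sg0 * K := by
    rw [hSg0, hC₁, Matrix.add_mul, Matrix.add_mul, hRK]
    simp only [Matrix.mul_sub, Matrix.mul_assoc]
    abel
  rw [hL, hL']
  have key : ∀ (L : Matrix (Fin n) (Fin m) ℝ) (L' : Matrix (Fin m) (Fin n) ℝ),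
      (L - Kᵀ * Sg0) * Sg0⁻¹ * (L' - Sg0 * K)
        = L * Sg0⁻¹ * L' - L * K - Kᵀ * L' + Kᵀ * Sg0 * K := by
    intro L L'
    rw [Matrix.sub_mul, Matrix.mul_assoc Kᵀ, Matrix.mul_nonsing_inv _ hSg0inv, Matrix.mul_one,
      Matrix.sub_mul, Matrix.mul_sub, Matrix.mul_sub, Matrix.mul_assoc L _ (Sg0 * K),
      ← Matrix.mul_assoc Sg0⁻¹, Matrix.nonsing_inv_mul _ hSg0inv, Matrix.one_mul,
      Matrix.mul_assoc Kᵀ Sg0]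
    abel
  have hKS : Kᵀ * Sᵀ = S * K := by rw [← hRK, ← Matrix.mul_assoc, hKR]
  have hKRK : Kᵀ * (R * K) = S * K := by rw [hRK, hKS]
  rw [key, hA₁, hC₁, hQ₁]
  have hS3 : Kᵀ * Sg0 * K = S * K + Kᵀ * Dᵀ * P * D * K + Kᵀ * W * K := by
    rw [hSg0, Matrix.mul_add, Matrix.mul_add, hKR]
    simp only [Matrix.add_mul, Matrix.mul_assoc]
  rw [hS3]
  simp only [Matrix.transpose_sub, Matrix.transpose_mul, Matrix.sub_mul, Matrix.mul_sub,
    Matrix.add_mul, Matrix.mul_add, Matrix.mul_assoc, hKS]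
  abel
end
end

section
/- Let A, C ∈ ℝ^{n×n}, B, D ∈ ℝ^{n×m}, P, Π, Q ∈ S^n, S ∈ ℝ^{n×m}, and let R ∈ S^m be invertible. Let E : Θ → ℝ^{n×n} and F : Θ → ℝ^{n×m} be measurable with ∫|E(θ)|²ν(dθ) < ∞ and ∫|F(θ)|²ν(dθ) < ∞. Assume Σ := R + DᵀP D + ∫F(θ)ᵀP F(θ)ν(dθ) is invertible. Define A₁ := A − B R⁻¹Sᵀ, C₁ := C − D R⁻¹Sᵀ, E₁(θ) := E(θ) − F(θ)R⁻¹Sᵀ, Q₁ := Q − S R⁻¹Sᵀ. Then Π A + AᵀΠ + CᵀP C + ∫EᵀP E dν + Q − (S + Π B + CᵀP D + ∫EᵀP F dν) Σ⁻¹ (Sᵀ + BᵀΠ + DᵀP C + ∫FᵀP E dν) = Π A₁ + A₁ᵀΠ + C₁ᵀP C₁ + ∫E₁ᵀP E₁ dν + Q₁ − (Π B + C₁ᵀP D + ∫E₁ᵀP F dν) Σ⁻¹ (BᵀΠ + DᵀP C₁ + ∫FᵀP E₁ dν). (Part 2 of Lemma 3.3, applied with the combined coefficients A+Ā, B+B̄,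 etc.: the Riccati equations (3.3) for Problem MF and (3.9) for Problem NC are the same.) -/
open Matrix MeasureTheory

noncomputable section

theorem memLp_entry_aux {Θ : Type*} [MeasurableSpace Θ] (ν : Measure Θ) {p q : ℕ}
    (M : Θ → Matrix (Fin p) (Fin q) ℝ) (hM : ∀ i j, Measurable fun θ => M θ i j)
    (h2 : Integrable (fun θ => ∑ i, ∑ j, (M θ i j) ^ 2) ν) (i : Fin p) (j : Fin q) :
    MemLp (fun θ => M θ i j) 2 ν := by
  rw [memLp_two_iff_integrable_sq (hM i j).aestronglyMeasurable]
  refine h2.mono' ((hM i j).pow_const 2).aestronglyMeasurable (Filter.Eventually.of_forall ?_)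
  intro θ
  rw [Real.norm_of_nonneg (sq_nonneg _)]
  calc (M θ i j) ^ 2 ≤ ∑ j, (M θ i j) ^ 2 :=
        Finset.single_le_sum (f := fun j => (M θ i j) ^ 2) (fun _ _ => sq_nonneg _)
          (Finset.mem_univ j)
    _ ≤ _ := Finset.single_le_sum (f := fun i => ∑ j, (M θ i j) ^ 2)
        (fun _ _ => Finset.sum_nonneg fun _ _ => sq_nonneg _) (Finset.mem_univ i)

theorem integrable_quad_aux {Θ : Type*} [MeasurableSpace Θ] (ν : Measure Θ) {p q r : ℕ}
    (M : Θ → Matrix (Fin p) (Fin q) ℝ) (N : Θ → Matrix (Fin p) (Fin r) ℝ)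
    (P : Matrix (Fin p) (Fin p) ℝ)
    (hM : ∀ i j, MemLp (fun θ => M θ i j) 2 ν) (hN : ∀ i j, MemLp (fun θ => N θ i j) 2 ν)
    (i : Fin q) (j : Fin r) : Integrable (fun θ => ((M θ)ᵀ * P * N θ) i j) ν := by
  simp only [Matrix.mul_apply, Matrix.transpose_apply, Finset.sum_mul]
  refine integrable_finsetSum _ fun k _ => integrable_finsetSum _ fun l _ => ?_
  have h : Integrable (fun θ => M θ l i * N θ k j) ν := (hM l i).integrable_mul (hN k j)
  refine (h.const_mul (P l k)).congr (Filter.Eventually.of_forall fun θ => ?_)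
  simp only
  ring

theorem matInt_sub_aux {Θ : Type*} [MeasurableSpace Θ] (ν : Measure Θ) {p q : ℕ}
    (M N : Θ → Matrix (Fin p) (Fin q) ℝ)
    (hM : ∀ i j, Integrable (fun θ => M θ i j) ν) (hN : ∀ i j, Integrable (fun θ => N θ i j) ν) :
    matInt ν (fun θ => M θ - N θ) = matInt ν M - matInt ν N := by
  ext i j
  simp only [matInt, Matrix.of_apply, Matrix.sub_apply]
  exact integral_sub (hM i j) (hN i j)

theorem matInt_mul_right_aux {Θ : Type*} [MeasurableSpace Θ] (ν : Measure Θ) {p q r : ℕ}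
    (M : Θ → Matrix (Fin p) (Fin q) ℝ) (K : Matrix (Fin q) (Fin r) ℝ)
    (hM : ∀ i j, Integrable (fun θ => M θ i j) ν) :
    (∀ i j, Integrable (fun θ => (M θ * K) i j) ν) ∧
    matInt ν (fun θ => M θ * K) = matInt ν M * K := by
  constructor
  · intro i j
    simp only [Matrix.mul_apply]
    exact integrable_finsetSum _ fun k _ => (hM i k).mul_const _
  · ext i j
    simp only [matInt, Matrix.of_apply, Matrix.mul_apply]
    rw [integral_finsetSum _ fun k _ => (hM i k).mul_const _]
    exact Finset.sum_congr rfl fun k _ => integral_mul_const _ _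

theorem matInt_mul_left_aux {Θ : Type*} [MeasurableSpace Θ] (ν : Measure Θ) {p q r : ℕ}
    (M : Θ → Matrix (Fin p) (Fin q) ℝ) (K : Matrix (Fin r) (Fin p) ℝ)
    (hM : ∀ i j, Integrable (fun θ => M θ i j) ν) :
    (∀ i j, Integrable (fun θ => (K * M θ) i j) ν) ∧
    matInt ν (fun θ => K * M θ) = K * matInt ν M := by
  constructor
  · intro i j
    simp only [Matrix.mul_apply]
    exact integrable_finsetSum _ fun k _ => (hM k j).const_mul _
  · ext i j
    simp only [matInt, Matrix.of_apply, Matrix.mul_apply]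
    rw [integral_finsetSum _ fun k _ => (hM k j).const_mul _]
    exact Finset.sum_congr rfl fun k _ => integral_const_mul _ _

/-- Part 2 of Lemma 3.3 (with the combined coefficients): the Riccati equation (3.3)
for Problem MF and the Riccati equation (3.9) for Problem NC have the same
right-hand side. -/
theorem riccati_generators_eq_mean_part
    {n m : ℕ} (hn : 0 < n) (hm : 0 < m)
    {Θ : Type*} [MeasurableSpace Θ] (ν : Measure Θ)
    (A C : Matrix (Fin n) (Fin n) ℝ) (B D : Matrix (Fin n) (Fin m) ℝ)
    (P Pim Q : Matrix (Fin n) (Fin n) ℝ)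
    (hP : P.IsSymm) (hPim : Pim.IsSymm) (hQ : Q.IsSymm)
    (S : Matrix (Fin n) (Fin m) ℝ)
    (R : Matrix (Fin m) (Fin m) ℝ) (hR : R.IsSymm) (hRinv : IsUnit R.det)
    (E : Θ → Matrix (Fin n) (Fin n) ℝ) (F : Θ → Matrix (Fin n) (Fin m) ℝ)
    (hEmeas : ∀ i j, Measurable fun θ => E θ i j)
    (hFmeas : ∀ i j, Measurable fun θ => F θ i j)
    (hE2 : Integrable (fun θ => ∑ i, ∑ j, (E θ i j) ^ 2) ν)
    (hF2 : Integrable (fun θ => ∑ i, ∑ j, (F θ i j) ^ 2) ν)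
    (Sg : Matrix (Fin m) (Fin m) ℝ)
    (hSg : Sg = R + Dᵀ * P * D + matInt ν (fun θ => (F θ)ᵀ * P * F θ))
    (hSginv : IsUnit Sg.det)
    (A₁ C₁ : Matrix (Fin n) (Fin n) ℝ) (hA₁ : A₁ = A - B * R⁻¹ * Sᵀ)
    (hC₁ : C₁ = C - D * R⁻¹ * Sᵀ)
    (E₁ : Θ → Matrix (Fin n) (Fin n) ℝ)
    (hE₁ : ∀ θ, E₁ θ = E θ - F θ * R⁻¹ * Sᵀ)
    (Q₁ : Matrix (Fin n) (Fin n) ℝ) (hQ₁ : Q₁ = Q - S * R⁻¹ * Sᵀ) :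
    Pim * A + Aᵀ * Pim + Cᵀ * P * C + matInt ν (fun θ => (E θ)ᵀ * P * E θ) + Q
      - (S + Pim * B + Cᵀ * P * D + matInt ν (fun θ => (E θ)ᵀ * P * F θ)) * Sg⁻¹
        * (Sᵀ + Bᵀ * Pim + Dᵀ * P * C + matInt ν (fun θ => (F θ)ᵀ * P * E θ))
      = Pim * A₁ + A₁ᵀ * Pim + C₁ᵀ * P * C₁ + matInt ν (fun θ => (E₁ θ)ᵀ * P * E₁ θ) + Q₁
        - (Pim * B + C₁ᵀ * P * D + matInt ν (fun θ => (E₁ θ)ᵀ * P * F θ)) * Sg⁻¹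
          * (Bᵀ * Pim + Dᵀ * P * C₁ + matInt ν (fun θ => (F θ)ᵀ * P * E₁ θ)) := by
  obtain ⟨K, hK⟩ : ∃ K, K = R⁻¹ * Sᵀ := ⟨_, rfl⟩
  have hRK : R * K = Sᵀ := by
    rw [hK, ← Matrix.mul_assoc, Matrix.mul_nonsing_inv _ hRinv, Matrix.one_mul]
  have hKR : Kᵀ * R = S := by
    have := congrArg Matrix.transpose hRK
    rwa [Matrix.transpose_mul, hR.eq, Matrix.transpose_transpose] at this
  have hE := memLp_entry_aux ν E hEmeas hE2
  have hF := memLp_entry_aux ν F hFmeas hF2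
  have iEE := integrable_quad_aux ν E E P hE hE
  have iEF := integrable_quad_aux ν E F P hE hF
  have iFE := integrable_quad_aux ν F E P hF hE
  have iFF := integrable_quad_aux ν F F P hF hF
  obtain ⟨jEFK, eEFK⟩ := matInt_mul_right_aux ν _ K iEF
  obtain ⟨jFFK, eFFK⟩ := matInt_mul_right_aux ν _ K iFF
  obtain ⟨jKFE, eKFE⟩ := matInt_mul_left_aux ν _ Kᵀ iFE
  obtain ⟨jKFF, eKFF⟩ := matInt_mul_left_aux ν _ Kᵀ iFF
  obtain ⟨jKFFK, eKFFK⟩ := matInt_mul_right_aux ν _ K jKFF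
  have hE₁' : ∀ θ, E₁ θ = E θ - F θ * K := fun θ => by rw [hE₁, hK, Matrix.mul_assoc]
  have h1 : matInt ν (fun θ => (E₁ θ)ᵀ * P * F θ)
      = matInt ν (fun θ => (E θ)ᵀ * P * F θ) - Kᵀ * matInt ν (fun θ => (F θ)ᵀ * P * F θ) := by
    rw [← eKFF, ← matInt_sub_aux ν _ _ iEF jKFF]
    congr 1; funext θ
    rw [hE₁']
    simp only [Matrix.transpose_sub, Matrix.transpose_mul, Matrix.sub_mul, Matrix.mul_assoc]
  have h2 : matInt ν (fun θ => (F θ)ᵀ * P * E₁ θ)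
      = matInt ν (fun θ => (F θ)ᵀ * P * E θ) - matInt ν (fun θ => (F θ)ᵀ * P * F θ) * K := by
    rw [← eFFK, ← matInt_sub_aux ν _ _ iFE jFFK]
    congr 1; funext θ
    rw [hE₁']
    simp only [Matrix.mul_sub, Matrix.mul_assoc]
  have h3 : matInt ν (fun θ => (E₁ θ)ᵀ * P * E₁ θ)
      = (matInt ν (fun θ => (E θ)ᵀ * P * E θ) - matInt ν (fun θ => (E θ)ᵀ * P * F θ) * K)
        - (Kᵀ * matInt ν (fun θ => (F θ)ᵀ * P * E θ)
          - Kᵀ * matInt ν (fun θ => (F θ)ᵀ * P * F θ) * K) := by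
    rw [← eKFF, ← eKFFK, ← eKFE, ← eEFK, ← matInt_sub_aux ν _ _ iEE jEFK,
      ← matInt_sub_aux ν _ _ jKFE jKFFK, ← matInt_sub_aux ν]
    · congr 1; funext θ
      rw [hE₁']
      simp only [Matrix.transpose_sub, Matrix.transpose_mul, Matrix.sub_mul, Matrix.mul_sub,
        Matrix.mul_assoc]
      abel
    · exact fun i j => (iEE i j).sub (jEFK i j)
    · exact fun i j => (jKFE i j).sub (jKFFK i j)
  rw [h1, h2, h3]
  generalize matInt ν (fun θ => (E θ)ᵀ * P * E θ) = IEE at *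
  generalize matInt ν (fun θ => (E θ)ᵀ * P * F θ) = IEF at *
  generalize matInt ν (fun θ => (F θ)ᵀ * P * E θ) = IFE at *
  generalize matInt ν (fun θ => (F θ)ᵀ * P * F θ) = IFF at *
  have hA' : A₁ = A - B * K := by rw [hA₁, hK, Matrix.mul_assoc]
  have hC' : C₁ = C - D * K := by rw [hC₁, hK, Matrix.mul_assoc]
  have hQ' : Q₁ = Q - Kᵀ * R * K := by rw [hQ₁, hKR, hK, Matrix.mul_assoc]
  have hI : IFF = Sg - R - Dᵀ * P * D := by rw [hSg]; abel
  obtain ⟨L, hL⟩ : ∃ L, L = S + Pim * B + Cᵀ * P * D + IEF := ⟨_, rfl⟩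
  obtain ⟨L', hL'⟩ : ∃ L', L' = Sᵀ + Bᵀ * Pim + Dᵀ * P * C + IFE := ⟨_, rfl⟩
  have e1 : Pim * B + C₁ᵀ * P * D + (IEF - Kᵀ * IFF) = L - Kᵀ * Sg := by
    rw [hL, hC', hI, ← hKR]
    simp only [Matrix.transpose_sub, Matrix.transpose_mul, Matrix.sub_mul, Matrix.mul_sub,
      Matrix.mul_assoc]
    abel
  have e2 : Bᵀ * Pim + Dᵀ * P * C₁ + (IFE - IFF * K) = L' - Sg * K := by
    rw [hL', hC', hI, ← hRK]
    simp only [Matrix.sub_mul, Matrix.mul_sub, Matrix.mul_assoc]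
    abel
  have e3 : (L - Kᵀ * Sg) * Sg⁻¹ * (L' - Sg * K)
      = L * Sg⁻¹ * L' - L * K - Kᵀ * L' + Kᵀ * Sg * K := by
    have a1 : (L - Kᵀ * Sg) * Sg⁻¹ = L * Sg⁻¹ - Kᵀ := by
      rw [Matrix.sub_mul, Matrix.mul_assoc Kᵀ, Matrix.mul_nonsing_inv _ hSginv, Matrix.mul_one]
    have a2 : L * Sg⁻¹ * (Sg * K) = L * K := by
      rw [Matrix.mul_assoc, ← Matrix.mul_assoc Sg⁻¹, Matrix.nonsing_inv_mul _ hSginv,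
        Matrix.one_mul]
    rw [a1, Matrix.sub_mul, Matrix.mul_sub, a2, Matrix.mul_sub, Matrix.mul_assoc Kᵀ]
    abel
  rw [e1, e2, e3, ← hL, ← hL', hA', hC', hQ', hI]
  have b1 : L * K = Kᵀ * R * K + Pim * B * K + Cᵀ * P * D * K + IEF * K := by
    rw [hL, hKR]; simp only [Matrix.add_mul]
  have b2 : Kᵀ * L' = Kᵀ * R * K + Kᵀ * Bᵀ * Pim + Kᵀ * Dᵀ * P * C + Kᵀ * IFE := by
    rw [hL', ← hRK]; simp only [Matrix.mul_add, Matrix.mul_assoc]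
  rw [b1, b2]
  simp only [Matrix.transpose_sub, Matrix.transpose_mul, Matrix.sub_mul, Matrix.mul_sub,
    Matrix.mul_assoc]
  abel
end
end

section
/- Let a, b, r, μ, σ, λ, λ' be real numbers with σ ≠ 0 and λ > 0, and suppose λ' = [((μ−r)/σ)² − 2r]·λ + [r − a + b(μ−r)/σ]²·λ² (the scalar Riccati relation satisfied by the function λ of Example 5.4 and its derivative). Set m := r − a + b(μ−r)/σ. Define the 2×2 symmetric matrix Q^H := [[1 + b²λ, (r−a)λ], [(r−a)λ, 1 + λ' + 2rλ]], the column vector S^H := (−bσλ, (μ−r)λ)ᵀ ∈ ℝ², and the scalar R^H := λσ² > 0. Then Q^H − (1/R^H)·S^H (S^H)ᵀ = [[1, mλ], [mλ, 1 + m²λ²]], and this matrix is positive definite (its determinant equals 1 and its upper-left entry equals 1). (This is the verification in Example 5.4 that, with H = diag(0, λ) and K = 0, the Schur complement condition of Assumption (S) holds for the equivalent cost functional J^{HK} of the asset-liability management problem, even though the original problem has R = 0.) -/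
open Matrix

/-- Example 5.4: with `H = diag(0, λ)` and `K = 0`, the Schur complement of the
transformed cost data of the equivalent cost functional `J^{HK}` equals
`[[1, mλ], [mλ, 1 + m²λ²]]`, which is positive definite (its determinant equals 1
and its upper-left entry equals 1), verifying Assumption (S) for the
asset-liability management problem even though the original problem has `R = 0`.
Here `l` and `l'` play the roles of `λ` and `λ̇`. -/
theorem example_5_4_schur_complement
    (a b r μ σ l l' m : ℝ) (hσ : σ ≠ 0) (hl : 0 < l)
    (hl' : l' = (((μ - r) / σ) ^ 2 - 2 * r) * l + (r - a + b * (μ - r) / σ) ^ 2 * l ^ 2)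
    (hm : m = r - a + b * (μ - r) / σ)
    (QH : Matrix (Fin 2) (Fin 2) ℝ)
    (hQH : QH = !![1 + b ^ 2 * l, (r - a) * l; (r - a) * l, 1 + l' + 2 * r * l])
    (SH : Matrix (Fin 2) (Fin 1) ℝ)
    (hSH : SH = !![-b * σ * l; (μ - r) * l])
    (RH : ℝ) (hRH : RH = l * σ ^ 2) :
    0 < RH
    ∧ QH - (1 / RH) • (SH * SHᵀ) = !![1, m * l; m * l, 1 + m ^ 2 * l ^ 2]
    ∧ (QH - (1 / RH) • (SH * SHᵀ)).PosDef
    ∧ (QH - (1 / RH) • (SH * SHᵀ)).det = 1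
    ∧ (QH - (1 / RH) • (SH * SHᵀ)) 0 0 = 1 := by
  have hl0 : l ≠ 0 := hl.ne'
  have hE : QH - (1 / RH) • (SH * SHᵀ) = !![1, m * l; m * l, 1 + m ^ 2 * l ^ 2] := by
    subst hQH hSH hRH hl' hm
    ext i j
    fin_cases i <;> fin_cases j <;>
      simp [Matrix.vecMul, dotProduct] <;> field_simp <;> ring
  refine ⟨by rw [hRH]; positivity, hE, ?_, ?_, ?_⟩
  · rw [hE]
    refine Matrix.PosDef.of_dotProduct_mulVec_pos ?_ ?_
    · ext i j
      fin_cases i <;> fin_cases j <;> simp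
    · intro x hx
      have key : star x ⬝ᵥ (!![1, m * l; m * l, 1 + m ^ 2 * l ^ 2] *ᵥ x)
          = (x 0 + m * l * x 1) ^ 2 + x 1 ^ 2 := by
        simp [Matrix.mulVec, dotProduct, Fin.sum_univ_two]
        ring
      rw [key]
      by_cases h1 : x 1 = 0
      · have h0 : x 0 ≠ 0 := by
          intro h0
          apply hx
          ext i
          fin_cases i
          · exact h0
          · exact h1
        rw [h1]
        simp only [mul_zero, add_zero]
        positivity
      · positivity
  · rw [hE, Matrix.det_fin_two_of]
    ring
  · rw [hE]
    simp
end
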